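/- Let c be the unique real number x > (√3+1)/2 satisfying 1/x + 20/(17x²) + 40/(17x²·(2x/(√3+1) − 1)) = 1 (so c ≈ 2.5404). Assume that (i) every instance of the chore division problem with two agents (arbitrary entitlements) admits a ((√3+1)/2)-WMMS assignment, and (ii) every instance with four agents and equal entitlements (1/4, 1/4, 1/4, 1/4) admits a (20/17)-MMS assignment. Then every instance of the asymmetric chore division problem with four agents admits a c-WMMS assignment. -/

import Mathlib

open Finset

/-- Cost of a bundle `S` of chores to agent `i`, given per-chore costs `V`. -/
noncomputable def costOf {n m : ℕ} (V : Fin n → Fin m → ℝ) (i : Fin n)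
    (S : Finset (Fin m)) : ℝ :=
  ∑ b ∈ S, V i b

/-- `A` is an `n`-partition of the chores: pairwise disjoint bundles whose union
is the set of all chores. -/
def IsPartition {n m : ℕ} (A : Fin n → Finset (Fin m)) : Prop :=
  (∀ j k, j ≠ k → Disjoint (A j) (A k)) ∧ Finset.univ.biUnion A = Finset.univ

/-- Weighted maximin share of agent `i` under entitlements `w`. -/
noncomputable def WMMS {n m : ℕ} (V : Fin n → Fin m → ℝ) (w : Fin n → ℝ)
    (i : Fin n) : ℝ :=
  sInf { x | ∃ A : Fin n → Finset (Fin m), IsPartition A ∧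
    x = ⨆ j, costOf V i (A j) * (w i / w j) }

/-- Unweighted maximin share of agent `i`. -/
noncomputable def MMS {n m : ℕ} (V : Fin n → Fin m → ℝ) (i : Fin n) : ℝ :=
  sInf { x | ∃ A : Fin n → Finset (Fin m), IsPartition A ∧
    x = ⨆ j, costOf V i (A j) }

/-!
Two operations turn assignments for other instances into assignments for the given one. Delegation
lets a subset of the agents do all the chores: merging the bundles of the others into theirs raises
their weighted shares by at most the ratio by which their entitlements have to grow. Cloning lets an
agent occupy several seats of a symmetric instance and keep all the corresponding bundles.

Order the agents by entitlement, `w₀ ≤ w₁ ≤ w₂ ≤ w₃`, write `T` for the total entitlement, `α` for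
the two-agent guarantee and `β` for the symmetric four-agent one. If `T ≤ c w₃`, delegate all to
agent 3. If `β w₃ ≤ c w₀`, the symmetric assignment is already good enough. Otherwise `w₃ < T / c`
and `w₀ < β T / c²`, and the equation for `c` makes `w₂` so large that agent 2 can absorb agent 0;
if also agent 3 can absorb agent 1, delegate to agents 2 and 3. If not, `w₁` is large enough for
agents 1, 2, 3 to accept symmetric bundles, and agent 3 takes the bundle of agent 0 as well.
-/

section Partition

variable {n k m : ℕ}

lemma isPartition_ite_univ (i : Fin n) :
    IsPartition fun j : Fin n ↦ if j = i then (univ : Finset (Fin m)) else ∅ := by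
  refine ⟨fun j l hjl ↦ ?_, eq_univ_of_forall fun b ↦ mem_biUnion.2 ⟨i, mem_univ i, by simp⟩⟩
  by_cases hj : j = i
  · simp [show l ≠ i from hj ▸ hjl.symm]
  · simp [hj]

/-- The bundles obtained from `A` by handing the `j`-th bundle over to position `p j`. -/
def mergeBundles (p : Fin n → Fin k) (A : Fin n → Finset (Fin m)) (l : Fin k) : Finset (Fin m) :=
  ({j | p j = l} : Finset (Fin n)).biUnion A

lemma IsPartition.merge {A : Fin n → Finset (Fin m)} (hA : IsPartition A)
    (p : Fin n → Fin k) : IsPartition (mergeBundles p A) := by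
  refine ⟨fun l l' hl ↦ ?_, ?_⟩
  · simp only [mergeBundles, disjoint_biUnion_left, disjoint_biUnion_right, mem_filter_univ]
    rintro j rfl j' rfl
    exact hA.1 j' j fun h ↦ hl (h ▸ rfl)
  · ext b
    have hb : b ∈ univ.biUnion A := hA.2 ▸ mem_univ b
    simpa [mergeBundles] using hb

lemma IsPartition.costOf_mergeBundles {N : ℕ} {A : Fin n → Finset (Fin m)} (hA : IsPartition A)
    (p : Fin n → Fin k) (V : Fin N → Fin m → ℝ) (i : Fin N) (l : Fin k) :
    costOf V i (mergeBundles p A l) = ∑ j with p j = l, costOf V i (A j) :=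
  sum_biUnion fun j _ j' _ hj ↦ hA.1 j j' hj

lemma IsPartition.costOf_mergeBundles_le {N : ℕ} {A : Fin n → Finset (Fin m)} (hA : IsPartition A)
    {p : Fin n → Fin k} {V : Fin N → Fin m → ℝ} {i : Fin N} {l : Fin k} {x : ℝ}
    (hx : ∀ j, p j = l → costOf V i (A j) ≤ x) :
    costOf V i (mergeBundles p A l) ≤ #{j | p j = l} * x := by
  rw [hA.costOf_mergeBundles, ← nsmul_eq_mul]
  exact sum_le_card_nsmul _ _ _ fun j hj ↦ hx j (mem_filter_univ j |>.1 hj)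

end Partition

section Share

variable {n k m : ℕ} {V : Fin n → Fin m → ℝ} {w : Fin n → ℝ}

lemma isLeast_WMMS (V : Fin n → Fin m → ℝ) (w : Fin n → ℝ) (i : Fin n) :
    IsLeast {x | ∃ A : Fin n → Finset (Fin m), IsPartition A ∧
      x = ⨆ j, costOf V i (A j) * (w i / w j)} (WMMS V w i) := by
  have hfin : {x | ∃ A : Fin n → Finset (Fin m), IsPartition A ∧
      x = ⨆ j, costOf V i (A j) * (w i / w j)}.Finite :=
    (Set.finite_range fun A : Fin n → Finset (Fin m) ↦ ⨆ j, costOf V i (A j) * (w i / w j)).subset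
      fun _ ⟨A, _, hx⟩ ↦ ⟨A, hx.symm⟩
  exact ⟨Set.Nonempty.csInf_mem ⟨_, _, isPartition_ite_univ i, rfl⟩ hfin,
    fun _ hx ↦ csInf_le hfin.bddBelow hx⟩

lemma WMMS_le_iff (hw : ∀ j, 0 < w j) {i : Fin n} {x : ℝ} :
    WMMS V w i ≤ x ↔ ∃ A : Fin n → Finset (Fin m), IsPartition A ∧
      ∀ j, costOf V i (A j) * w i ≤ x * w j := by
  have : Nonempty (Fin n) := ⟨i⟩
  have iSup_le_iff_forall (A : Fin n → Finset (Fin m)) :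
      ⨆ j, costOf V i (A j) * (w i / w j) ≤ x ↔ ∀ j, costOf V i (A j) * w i ≤ x * w j := by
    rw [ciSup_le_iff (Set.finite_range _).bddAbove]
    exact forall_congr' fun j ↦ by rw [← mul_div_assoc, div_le_iff₀ (hw j)]
  constructor
  · intro h
    obtain ⟨A, hA, hAx⟩ := (isLeast_WMMS V w i).1
    exact ⟨A, hA, (iSup_le_iff_forall A).1 (hAx ▸ h)⟩
  · rintro ⟨A, hA, hAx⟩
    exact ((isLeast_WMMS V w i).2 ⟨A, hA, rfl⟩).trans ((iSup_le_iff_forall A).2 hAx)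

lemma WMMS_nonneg (hV : ∀ i b, 0 ≤ V i b) (hw : ∀ i, 0 < w i) (i : Fin n) : 0 ≤ WMMS V w i := by
  obtain ⟨A, -, hA⟩ := (WMMS_le_iff (V := V) (i := i) hw).1 le_rfl
  have hcost : 0 ≤ costOf V i (A i) := sum_nonneg fun b _ ↦ hV i b
  exact hcost.trans (le_of_mul_le_mul_right (hA i) (hw i))

lemma WMMS_div_const (V : Fin n → Fin m → ℝ) (w : Fin n → ℝ) {t : ℝ} (ht : t ≠ 0) (i : Fin n) :
    WMMS V (fun j ↦ w j / t) i = WMMS V w i := by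
  simp only [WMMS, div_div_div_cancel_right₀ ht]

lemma MMS_eq_WMMS_one (V : Fin n → Fin m → ℝ) (i : Fin n) : MMS V i = WMMS V (fun _ ↦ 1) i := by
  simp only [MMS, WMMS, div_one, mul_one]

lemma MMS_mul_le (hV : ∀ i b, 0 ≤ V i b) (hw : ∀ i, 0 < w i) {M : ℝ} (hM : ∀ j, w j ≤ M)
    (i : Fin n) : MMS V i * w i ≤ WMMS V w i * M := by
  obtain ⟨A, hA, hAw⟩ := (WMMS_le_iff (V := V) (i := i) hw).1 le_rfl
  rw [← le_div_iff₀ (hw i), MMS_eq_WMMS_one, WMMS_le_iff fun _ ↦ one_pos]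
  refine ⟨A, hA, fun j ↦ ?_⟩
  rw [mul_one, mul_one, le_div_iff₀ (hw i)]
  exact (hAw j).trans (mul_le_mul_of_nonneg_left (hM j) (WMMS_nonneg hV hw i))

lemma WMMS_comp_le (hV : ∀ i b, 0 ≤ V i b) (hw : ∀ i, 0 < w i) {e : Fin k → Fin n}
    {p : Fin n → Fin k} {r : ℝ} (hr : ∀ l, ∑ j with p j = l, w j ≤ r * w (e l)) (l : Fin k) :
    WMMS (V ∘ e) (w ∘ e) l ≤ r * WMMS V w (e l) := by
  obtain ⟨A, hA, hAw⟩ := (WMMS_le_iff (V := V) (i := e l) hw).1 le_rfl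
  refine (WMMS_le_iff fun j ↦ hw (e j)).2 ⟨mergeBundles p A, hA.merge p, fun j ↦ ?_⟩
  calc costOf V (e l) (mergeBundles p A j) * w (e l)
      = ∑ q with p q = j, costOf V (e l) (A q) * w (e l) := by
        rw [hA.costOf_mergeBundles, sum_mul]
    _ ≤ ∑ q with p q = j, WMMS V w (e l) * w q := sum_le_sum fun q _ ↦ hAw q
    _ = WMMS V w (e l) * ∑ q with p q = j, w q := (mul_sum ..).symm
    _ ≤ WMMS V w (e l) * (r * w (e j)) := mul_le_mul_of_nonneg_left (hr j) (WMMS_nonneg hV hw _)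
    _ = r * WMMS V w (e l) * w (e j) := by ring

end Share

section Assignment

variable {n k m : ℕ} {V : Fin n → Fin m → ℝ} {w : Fin n → ℝ} {α β c : ℝ}

/-- The instance `(V, w)` admits a `c`-WMMS assignment. -/
def HasWMMSAssignment (V : Fin n → Fin m → ℝ) (w : Fin n → ℝ) (c : ℝ) : Prop :=
  ∃ S : Fin n → Finset (Fin m), IsPartition S ∧ ∀ i, costOf V i (S i) ≤ c * WMMS V w i

/-- Every instance with `n` agents and `m` chores admits a `c`-WMMS assignment. Entitlements are
only required to be positive, since `WMMS` does not change when they are rescaled. -/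
def GuaranteesWMMS (n m : ℕ) (c : ℝ) : Prop :=
  ∀ (V : Fin n → Fin m → ℝ) (w : Fin n → ℝ),
    (∀ i b, 0 ≤ V i b) → (∀ i, 0 < w i) → HasWMMSAssignment V w c

/-- Every instance with `n` equally entitled agents and `m` chores admits a `β`-MMS assignment. -/
def GuaranteesMMS (n m : ℕ) (β : ℝ) : Prop :=
  ∀ V : Fin n → Fin m → ℝ, (∀ i b, 0 ≤ V i b) →
    ∃ S : Fin n → Finset (Fin m), IsPartition S ∧ ∀ i, costOf V i (S i) ≤ β * MMS V i

lemma guaranteesWMMS_of_sum_eq_one [NeZero n]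
    (h : ∀ (V : Fin n → Fin m → ℝ) (w : Fin n → ℝ), (∀ i b, 0 ≤ V i b) → (∀ i, 0 < w i) →
      (∀ i, w i ≤ 1) → ∑ i, w i = 1 → HasWMMSAssignment V w c) :
    GuaranteesWMMS n m c := by
  intro V w hV hw
  have hT : 0 < ∑ j, w j := sum_pos (fun j _ ↦ hw j) univ_nonempty
  have hle (i : Fin n) : w i ≤ ∑ j, w j :=
    single_le_sum (f := w) (fun j _ ↦ (hw j).le) (mem_univ i)
  obtain ⟨S, hS, hSw⟩ := h V (fun i ↦ w i / ∑ j, w j) hV (fun i ↦ div_pos (hw i) hT)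
    (fun i ↦ (div_le_one hT).2 (hle i)) (by rw [← sum_div, div_self hT.ne'])
  exact ⟨S, hS, fun i ↦ WMMS_div_const V w hT.ne' i ▸ hSw i⟩

lemma guaranteesWMMS_one (m : ℕ) : GuaranteesWMMS 1 m 1 := by
  intro V w _ hw
  obtain ⟨A, hA, hAw⟩ := (isLeast_WMMS V w 0).1
  refine ⟨A, hA, fun i ↦ ?_⟩
  obtain rfl : i = 0 := Subsingleton.elim i 0
  simp [hAw, div_self (hw 0).ne']

/-- Delegation: the agents in the range of `e` do all the chores, the `l`-th of them replacing the
agents `j` with `p j = l`. -/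
theorem HasWMMSAssignment.of_comp (hV : ∀ i b, 0 ≤ V i b) (hw : ∀ i, 0 < w i)
    (hα : 0 < α) (hc : 0 ≤ c) {e : Fin k → Fin n} (he : Function.Injective e) (p : Fin n → Fin k)
    (hp : ∀ l, α * ∑ j with p j = l, w j ≤ c * w (e l))
    (h : HasWMMSAssignment (V ∘ e) (w ∘ e) α) : HasWMMSAssignment V w c := by
  obtain ⟨S, hS, hSw⟩ := h
  refine ⟨mergeBundles e S, hS.merge e, fun i ↦ ?_⟩
  have hr (l : Fin k) : ∑ j with p j = l, w j ≤ c / α * w (e l) := by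
    rw [div_mul_eq_mul_div, le_div_iff₀' hα]
    exact hp l
  have bundle_le (l : Fin k) (hl : e l = i) : costOf V i (S l) ≤ c * WMMS V w i := by
    subst hl
    calc costOf V (e l) (S l)
        ≤ α * WMMS (V ∘ e) (w ∘ e) l := hSw l
      _ ≤ α * (c / α * WMMS V w (e l)) := by gcongr; exact WMMS_comp_le hV hw hr l
      _ = c * WMMS V w (e l) := by field_simp
  have card_le : (#{l | e l = i} : ℝ) ≤ 1 := mod_cast card_le_one.2 fun a ha b hb ↦
    he ((mem_filter_univ a |>.1 ha).trans (mem_filter_univ b |>.1 hb).symm)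
  exact (hS.costOf_mergeBundles_le bundle_le).trans
    (mul_le_of_le_one_left (mul_nonneg hc (WMMS_nonneg hV hw i)) card_le)

/-- Cloning: agent `i` occupies all the seats `l` of the symmetric instance with `t l = i`. -/
theorem GuaranteesMMS.hasWMMSAssignment (h : GuaranteesMMS n m β) (hβ : 0 ≤ β)
    (hV : ∀ i b, 0 ≤ V i b) (hw : ∀ i, 0 < w i) {M : ℝ} (hM : ∀ j, w j ≤ M) (t : Fin n → Fin n)
    (ht : ∀ i, #{l | t l = i} * (β * M) ≤ c * w i) : HasWMMSAssignment V w c := by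
  obtain ⟨S, hS, hSw⟩ := h (V ∘ t) fun l ↦ hV (t l)
  refine ⟨mergeBundles t S, hS.merge t, fun i ↦ ?_⟩
  have bundle_le (l : Fin n) (hl : t l = i) : costOf V i (S l) ≤ β * MMS V i := hl ▸ hSw l
  refine (hS.costOf_mergeBundles_le bundle_le).trans (le_of_mul_le_mul_right ?_ (hw i))
  calc #{l | t l = i} * (β * MMS V i) * w i
      = #{l | t l = i} * β * (MMS V i * w i) := by ring
    _ ≤ #{l | t l = i} * β * (WMMS V w i * M) := 
        mul_le_mul_of_nonneg_left (MMS_mul_le hV hw hM i) (by positivity)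
    _ = #{l | t l = i} * (β * M) * WMMS V w i := by ring
    _ ≤ c * w i * WMMS V w i := mul_le_mul_of_nonneg_right (ht i) (WMMS_nonneg hV hw i)
    _ = c * WMMS V w i * w i := by ring

lemma HasWMMSAssignment.of_comp_perm (hV : ∀ i b, 0 ≤ V i b) (hw : ∀ i, 0 < w i) (hc : 0 < c)
    (σ : Equiv.Perm (Fin n)) (h : HasWMMSAssignment (V ∘ σ) (w ∘ σ) c) :
    HasWMMSAssignment V w c := by
  refine h.of_comp hV hw hc hc.le σ.injective σ.symm fun l ↦ le_of_eq ?_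
  simp [Equiv.symm_apply_eq, filter_eq']

lemma HasWMMSAssignment.of_delegating_to_one (hV : ∀ i b, 0 ≤ V i b) (hw : ∀ i, 0 < w i)
    (hc : 0 ≤ c) {i : Fin n} (hi : ∑ j, w j ≤ c * w i) : HasWMMSAssignment V w c := by
  refine (guaranteesWMMS_one m _ _ (fun _ ↦ hV i) fun _ ↦ hw i).of_comp hV hw one_pos hc
    (e := fun _ ↦ i) (Function.injective_of_subsingleton _) (fun _ ↦ 0) fun l ↦ ?_
  simpa [Subsingleton.elim (0 : Fin 1) l] using hi

end Assignment

section Constant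

variable {α c : ℝ}

lemma cleared_constant_equation (hα : 0 < α) (hαc : α < c)
    (hc : 1 / c + 20 / (17 * c ^ 2) + 40 / (17 * c ^ 2 * (c / α - 1)) = 1) :
    2 * α * (20 / 17) = (c - α) * (c ^ 2 - c - 20 / 17) := by
  have hc0 : 0 < c := hα.trans hαc
  have hsub : c - α ≠ 0 := (sub_pos.2 hαc).ne'
  rw [div_sub_one hα.ne'] at hc
  field_simp at hc
  linarith

lemma forty_div_seventeen_le (hα : 5 / 4 ≤ α) (hαc : α ≤ c)
    (hc : 2 * α * (20 / 17) = (c - α) * (c ^ 2 - c - 20 / 17)) : 40 / 17 ≤ c := by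
  by_contra! hlt
  -- `580 / 289` is the value of the left-hand side at `c = 40 / 17`.
  have quadratic_le : c ^ 2 - c - 20 / 17 ≤ 580 / 289 := by nlinarith
  have := mul_le_mul_of_nonneg_left quadratic_le (sub_nonneg.2 hαc)
  linarith

lemma sqrt_three_add_one_div_two_mem_Icc : (√3 + 1) / 2 ∈ Set.Icc (5 / 4 : ℝ) (3 / 2) := by
  have lower : 3 / 2 ≤ √3 := Real.le_sqrt_of_sq_le (by norm_num)
  have upper : √3 ≤ 2 := Real.sqrt_le_iff.2 (by norm_num)
  constructor <;> linarith

end Constant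

section FourAgents

variable {m : ℕ} {α β c : ℝ} {V : Fin 4 → Fin m → ℝ} {w : Fin 4 → ℝ}

-- `hc` is `1 / c + β / c ^ 2 + 2 * β / (c ^ 2 * (c / α - 1)) ≤ 1` with denominators cleared.
lemma mul_lightest_le (hα : 0 < α) (hβ : 0 ≤ β) (hαc : α ≤ c)
    (hc : 2 * α * β ≤ (c - α) * (c ^ 2 - c - β)) (hw3 : 0 ≤ w 3) (h12 : w 1 ≤ w 2)
    (h3 : c * w 3 ≤ ∑ i, w i) (h0 : c * w 0 ≤ β * w 3) : α * w 0 ≤ (c - α) * w 2 := by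
  have hc0 : 0 < c := hα.trans_le hαc
  set T := ∑ i, w i with hT
  rw [Fin.sum_univ_four] at hT
  have hT0 : 0 ≤ T := (mul_nonneg hc0.le hw3).trans h3
  have w0_le : c ^ 2 * w 0 ≤ β * T := by
    nlinarith [mul_le_mul_of_nonneg_left h0 hc0.le, mul_le_mul_of_nonneg_left h3 hβ]
  have w12_ge : (c ^ 2 - c - β) * T ≤ c ^ 2 * (w 1 + w 2) := by
    nlinarith [mul_le_mul_of_nonneg_left h3 hc0.le]
  have scaled : c ^ 2 * (2 * (α * w 0)) ≤ c ^ 2 * ((c - α) * (w 1 + w 2)) :=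
    calc c ^ 2 * (2 * (α * w 0))
        = 2 * α * (c ^ 2 * w 0) := by ring
      _ ≤ 2 * α * (β * T) := by gcongr
      _ = 2 * α * β * T := by ring
      _ ≤ (c - α) * (c ^ 2 - c - β) * T := by gcongr
      _ = (c - α) * ((c ^ 2 - c - β) * T) := by ring
      _ ≤ (c - α) * (c ^ 2 * (w 1 + w 2)) := mul_le_mul_of_nonneg_left w12_ge (sub_nonneg.2 hαc)
      _ = c ^ 2 * ((c - α) * (w 1 + w 2)) := by ring
  have := le_of_mul_le_mul_left scaled (pow_pos hc0 2)
  linarith [mul_le_mul_of_nonneg_left h12 (sub_nonneg.2 hαc)]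

lemma HasWMMSAssignment.of_delegating_to_two_three (hα : 0 < α) (hc : 0 ≤ c)
    (h2 : GuaranteesWMMS 2 m α) (hV : ∀ i b, 0 ≤ V i b) (hw : ∀ i, 0 < w i)
    (agent2_absorbs : α * (w 0 + w 2) ≤ c * w 2) (agent3_absorbs : α * (w 1 + w 3) ≤ c * w 3) :
    HasWMMSAssignment V w c := by
  refine (h2 _ _ (fun _ ↦ hV _) fun _ ↦ hw _).of_comp hV hw hα hc (e := ![2, 3])
    (by decide) ![0, 1, 0, 1] fun l ↦ ?_
  fin_cases l
  · simpa [sum_filter, Fin.sum_univ_four] using agent2_absorbs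
  · simpa [sum_filter, Fin.sum_univ_four] using agent3_absorbs

lemma HasWMMSAssignment.of_cloning_three (hβ : 0 ≤ β) (hβc : 2 * β ≤ c) (h4 : GuaranteesMMS 4 m β)
    (hV : ∀ i b, 0 ≤ V i b) (hw : ∀ i, 0 < w i) (le_w3 : ∀ j, w j ≤ w 3)
    (w1_ge : β * w 3 ≤ c * w 1) (w2_ge : β * w 3 ≤ c * w 2) : HasWMMSAssignment V w c := by
  have w0_ge : 0 ≤ c * w 0 := mul_nonneg (by linarith) (hw 0).le
  have w3_ge : 2 * (β * w 3) ≤ c * w 3 := by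
    rw [← mul_assoc]
    exact mul_le_mul_of_nonneg_right hβc (hw 3).le
  have seats : ∀ i : Fin 4, #{l : Fin 4 | ![3, 1, 2, 3] l = i} = ![0, 1, 1, 2] i := by decide
  refine h4.hasWMMSAssignment hβ hV hw le_w3 ![3, 1, 2, 3] fun i ↦ ?_
  rw [seats]
  fin_cases i
  · simpa using w0_ge
  · simpa using w1_ge
  · simpa using w2_ge
  · simpa using w3_ge

theorem HasWMMSAssignment.of_monotone (hα : 0 < α) (hβ : 0 ≤ β) (hαc : α ≤ c) (hβc : 2 * β ≤ c)
    (hαβc : α * β ≤ c * (c - α)) (hc : 2 * α * β ≤ (c - α) * (c ^ 2 - c - β))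
    (h2 : GuaranteesWMMS 2 m α) (h4 : GuaranteesMMS 4 m β) (hV : ∀ i b, 0 ≤ V i b)
    (hw : ∀ i, 0 < w i) (hmono : Monotone w) : HasWMMSAssignment V w c := by
  have hc0 : 0 < c := hα.trans_le hαc
  have le_w3 (j : Fin 4) : w j ≤ w 3 := hmono (Fin.le_last j)
  have w12 : w 1 ≤ w 2 := hmono (by decide)
  rcases le_total (∑ i, w i) (c * w 3) with agent3_absorbs_all | w3_small
  · exact .of_delegating_to_one hV hw hc0.le agent3_absorbs_all
  rcases le_total (β * w 3) (c * w 0) with w0_large | w0_small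
  · refine h4.hasWMMSAssignment hβ hV hw le_w3 id fun i ↦ ?_
    have h0i : c * w 0 ≤ c * w i := by gcongr; exact hmono (Fin.zero_le i)
    simpa [filter_eq'] using w0_large.trans h0i
  have w0_le := mul_lightest_le hα hβ hαc hc (hw 3).le w12 w3_small w0_small
  rcases le_total (α * w 1) ((c - α) * w 3) with w1_le | w1_large
  · exact .of_delegating_to_two_three hα hc0.le h2 hV hw (by linarith) (by linarith)
  · have w1_ge : β * w 3 ≤ c * w 1 := by
      refine le_of_mul_le_mul_left ?_ hα
      calc α * (β * w 3) = α * β * w 3 := by ring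
        _ ≤ c * (c - α) * w 3 := mul_le_mul_of_nonneg_right hαβc (hw 3).le
        _ = c * ((c - α) * w 3) := by ring
        _ ≤ c * (α * w 1) := mul_le_mul_of_nonneg_left w1_large hc0.le
        _ = α * (c * w 1) := by ring
    exact .of_cloning_three hβ hβc h4 hV hw le_w3 w1_ge
      (w1_ge.trans (mul_le_mul_of_nonneg_left w12 hc0.le))

theorem four_agent_WMMS_general (hα : 0 < α) (hβ : 0 ≤ β) (hαc : α ≤ c) (hβc : 2 * β ≤ c)
    (hαβc : α * β ≤ c * (c - α)) (hc : 2 * α * β ≤ (c - α) * (c ^ 2 - c - β))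
    (h2 : GuaranteesWMMS 2 m α) (h4 : GuaranteesMMS 4 m β) : GuaranteesWMMS 4 m c :=
  fun _ w hV hw ↦ .of_comp_perm hV hw (hα.trans_le hαc) (Tuple.sort w)
    (.of_monotone hα hβ hαc hβc hαβc hc h2 h4 (fun _ ↦ hV _) (fun _ ↦ hw _)
      (Tuple.monotone_sort w))

end FourAgents

/-- Theorem for four agents: with `c > (√3+1)/2` satisfying
`1/c + 20/(17c²) + 40/(17c²(2c/(√3+1)−1)) = 1` (`c ≈ 2.5404`), assuming the
two-agent `((√3+1)/2)`-WMMS guarantee and the symmetric four-agent `(20/17)`-MMS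
guarantee, every four-agent instance admits a `c`-WMMS assignment. -/
theorem four_agent_WMMS (c : ℝ)
    (hc1 : (Real.sqrt 3 + 1) / 2 < c)
    (hc2 : 1 / c + 20 / (17 * c ^ 2) +
      40 / (17 * c ^ 2 * (2 * c / (Real.sqrt 3 + 1) - 1)) = 1)
    (h2 : ∀ (m : ℕ) (V : Fin 2 → Fin m → ℝ) (w : Fin 2 → ℝ),
      (∀ i b, 0 ≤ V i b) → (∀ i, 0 < w i) → (∀ i, w i ≤ 1) → (∑ i, w i = 1) →
      ∃ S : Fin 2 → Finset (Fin m), IsPartition S ∧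
        ∀ i, costOf V i (S i) ≤ (Real.sqrt 3 + 1) / 2 * WMMS V w i)
    (h4 : ∀ (m : ℕ) (V : Fin 4 → Fin m → ℝ), (∀ i b, 0 ≤ V i b) →
      ∃ S : Fin 4 → Finset (Fin m), IsPartition S ∧
        ∀ i, costOf V i (S i) ≤ (20 / 17) * MMS V i) :
    ∀ (m : ℕ) (V : Fin 4 → Fin m → ℝ) (w : Fin 4 → ℝ),
      (∀ i b, 0 ≤ V i b) → (∀ i, 0 < w i) → (∀ i, w i ≤ 1) → (∑ i, w i = 1) →
      ∃ S : Fin 4 → Finset (Fin m), IsPartition S ∧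
        ∀ i, costOf V i (S i) ≤ c * WMMS V w i := by
  obtain ⟨hα₁, hα₂⟩ := sqrt_three_add_one_div_two_mem_Icc
  have hα : 0 < (√3 + 1) / 2 := by positivity
  have hc := cleared_constant_equation hα hc1 (by rwa [div_div_eq_mul_div, mul_comm c 2])
  have hβc : 40 / 17 ≤ c := forty_div_seventeen_le hα₁ hc1.le hc
  exact fun m V w hV hw _ _ ↦ four_agent_WMMS_general hα (by norm_num) hc1.le (by linarith)
    (by nlinarith) hc.le (guaranteesWMMS_of_sum_eq_one (h2 m)) (h4 m) V w hV hw
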